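/- Let J be a nonempty finite index set and let s, s' : J → ℝ satisfy 0 ≤ s_j ≤ s'_j ≤ 1 for all j ∈ J. Define S(s) = 1 − ∏_{j ∈ J}(1 − s_j) − ∑_{j ∈ J} s_j · ∏_{z ∈ J, z ≠ j}(1 − s_z). Then S(s) ≤ S(s'); that is, the parameter collision rate is monotone nondecreasing in each device's sparsity rate. -/

import Mathlib

/-!
If every device `j` uses a given parameter independently with probability `s j`, then `S(s)` is the
probability that at least two devices use it. Adding a device `a` makes this the average, with
weights `1 - s a` and `s a`, of the probabilities that at least two, respectively at least one, of
the other devices use the parameter. The latter probability is the larger, so the average increases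
with `s a`; both probabilities increase with the other rates, the first one by induction.
-/

section CollisionRate

open Finset

variable {ι R : Type*} [DecidableEq ι]

theorem sum_mul_prod_erase_insert [CommSemiring R] {a : ι} {T : Finset ι} (ha : a ∉ T)
    (f g : ι → R) :
    ∑ j ∈ insert a T, f j * ∏ z ∈ (insert a T).erase j, g z =
      f a * ∏ z ∈ T, g z + g a * ∑ j ∈ T, f j * ∏ z ∈ T.erase j, g z := by
  rw [sum_insert ha, erase_insert ha, mul_sum]
  congr 1
  refine sum_congr rfl fun j hj => ?_
  have a_notMem_erase : a ∉ T.erase j := fun h => ha (mem_of_mem_erase h)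
  rw [erase_insert_of_ne (ne_of_mem_of_not_mem hj ha).symm, prod_insert a_notMem_erase,
    mul_left_comm]

variable [CommRing R]

/-- The parameter collision rate `S(s)` of the aggregation set `T` with sparsity rates `s`. Rates
are defined on an ambient type of devices, so that `T` can grow while `s` stays fixed. -/
def collisionRate (T : Finset ι) (s : ι → R) : R :=
  1 - ∏ j ∈ T, (1 - s j) - ∑ j ∈ T, s j * ∏ z ∈ T.erase j, (1 - s z)

theorem collisionRate_insert {a : ι} {T : Finset ι} (ha : a ∉ T) (s : ι → R) :
    collisionRate (insert a T) s =
      (1 - s a) * collisionRate T s + s a * (1 - ∏ j ∈ T, (1 - s j)) := by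
  simp only [collisionRate, prod_insert ha, sum_mul_prod_erase_insert ha]
  ring

variable [PartialOrder R] [IsOrderedRing R] {T : Finset ι}

theorem collisionRate_le_one_sub_prod {s : ι → R} (hs₀ : ∀ j ∈ T, 0 ≤ s j)
    (hs₁ : ∀ j ∈ T, s j ≤ 1) : collisionRate T s ≤ 1 - ∏ j ∈ T, (1 - s j) :=
  sub_le_self _ <| sum_nonneg fun j hj => mul_nonneg (hs₀ j hj) <|
    prod_nonneg fun z hz => sub_nonneg.2 (hs₁ z (mem_of_mem_erase hz))

theorem collision_rate_mono_in_sparsity_general {s s' : ι → R}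
    (hs : ∀ j ∈ T, 0 ≤ s j ∧ s j ≤ s' j ∧ s' j ≤ 1) :
    collisionRate T s ≤ collisionRate T s' := by
  induction T using Finset.induction_on with
  | empty => simp [collisionRate]
  | insert a T ha ih =>
    obtain ⟨⟨ha₀, ha_le, ha₁⟩, hT⟩ := (forall_mem_insert ..).1 hs
    have prod_le : ∏ j ∈ T, (1 - s' j) ≤ ∏ j ∈ T, (1 - s j) :=
      prod_le_prod (fun j hj => sub_nonneg.2 (hT j hj).2.2)
        (fun j hj => sub_le_sub_left (hT j hj).2.1 1)
    have rate_le : collisionRate T s' ≤ 1 - ∏ j ∈ T, (1 - s' j) :=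
      collisionRate_le_one_sub_prod (fun j hj => (hT j hj).1.trans (hT j hj).2.1)
        (fun j hj => (hT j hj).2.2)
    have one_sub_nonneg : 0 ≤ 1 - s a := sub_nonneg.2 (ha_le.trans ha₁)
    calc
      collisionRate (insert a T) s
        = (1 - s a) * collisionRate T s + s a * (1 - ∏ j ∈ T, (1 - s j)) :=
          collisionRate_insert ha s
      _ ≤ (1 - s a) * collisionRate T s' + s a * (1 - ∏ j ∈ T, (1 - s' j)) := by
          gcongr
          exact ih hT
      _ = collisionRate T s' + s a * (1 - ∏ j ∈ T, (1 - s' j) - collisionRate T s') := by ring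
      _ ≤ collisionRate T s' + s' a * (1 - ∏ j ∈ T, (1 - s' j) - collisionRate T s') := by
          have := sub_nonneg.2 rate_le
          gcongr
      _ = (1 - s' a) * collisionRate T s' + s' a * (1 - ∏ j ∈ T, (1 - s' j)) := by ring
      _ = collisionRate (insert a T) s' := (collisionRate_insert ha s').symm

end CollisionRate

/-- The parameter collision rate
`S(s) = 1 − ∏_j (1 − s_j) − ∑_j s_j ∏_{z ≠ j} (1 − s_z)` over a nonempty finite index set
`J` is monotone nondecreasing in each device's sparsity rate: if `0 ≤ s_j ≤ s'_j ≤ 1` for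
all `j ∈ J`, then `S(s) ≤ S(s')`. -/
theorem collision_rate_mono_in_sparsity
    {J : Type*} [Fintype J] [Nonempty J] [DecidableEq J]
    (s s' : J → ℝ) (hs : ∀ j, 0 ≤ s j ∧ s j ≤ s' j ∧ s' j ≤ 1) :
    (1 - ∏ j, (1 - s j) - ∑ j, s j * ∏ z ∈ Finset.univ.erase j, (1 - s z)) ≤
    (1 - ∏ j, (1 - s' j) - ∑ j, s' j * ∏ z ∈ Finset.univ.erase j, (1 - s' z)) :=
  collision_rate_mono_in_sparsity_general fun j _ => hs j
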